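/- arXiv:1304.2904 — 2 statements merged into one kernel-verified Lean document; each statement's English description precedes it below -/
import Mathlib

section
/- Let λ ∈ (−1/2, ∞)^n and fix γ ∈ (0, 1/2] with γ ≤ min_{1≤k≤n}(λ_k + 1/2). Then there is C > 0 such that for all x, x' ∈ (0,∞)^n and t > 0: ∫_{|z|<√t} χ_{{x+z ∈ (0,∞)^n, x'+z ∉ (0,∞)^n}} Ξ_λ(x,z,t) dz ≤ C·(|x−x'|²/t)^γ, where Ξ_λ(x,z,t) = Π_{j=1}^n (x_j+z_j)^{2λ_j}/V_{√t}^{λ_j,+}(x_j) and V_s^{λ_j,+}(x_j) is the w_{λ_j}^+-measure of (x_j−s, x_j+s) ∩ (0,∞). -/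
open MeasureTheory
open scoped BigOperators

/-- `V_s^{λ,+}(x)`, the `w_λ^+` measure of `(x-s,x+s) ∩ (0,∞)`. -/
noncomputable def Vplus (l x s : ℝ) : ℝ :=
  ∫ u in Set.Ioo (x - s) (x + s) ∩ Set.Ioi (0 : ℝ), u ^ (2 * l)

/-- `Ξ_λ(x,z,t) = ∏_j (x_j+z_j)^{2λ_j} / V_{√t}^{λ_j,+}(x_j)`. -/
noncomputable def Xi {n : ℕ} (l : Fin n → ℝ) (x z : EuclideanSpace ℝ (Fin n)) (t : ℝ) : ℝ :=
  ∏ j, (x j + z j) ^ (2 * l j) / Vplus (l j) (x j) (Real.sqrt t)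

/-!
After dividing by `V_{√t}^{λ_j,+}(x_j)`, the weight `u^{2λ_j}` on `(x_j-√t,x_j+√t) ∩ (0,∞)` has mass
at most one, and `Ξ_λ(x,z,t)` is the product of these normalized weights at the point `x + z`. If
`x'_k + z_k ≤ 0` then `x_k + z_k ≤ |x-x'|`, so a union bound reduces the theorem to one variable,
where the fraction of mass lying below `d` is at most a multiple of `(d/√t)^{2λ_k+1}` as long as
`d ≤ √t`. Lowering the exponent to `2γ` gives the claim, and for `d ≥ √t` the bound is trivial.
-/

section ProductMeasure

variable {ι : Type*} [Fintype ι]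

lemma setIntegral_iUnion_le_sum {α : Type*} [MeasurableSpace α] {μ : Measure α} {f : α → ℝ}
    {s : ι → Set α} (hf0 : 0 ≤ f) (hf : ∀ i, IntegrableOn f (s i) μ) :
    ∫ a in ⋃ i, s i, f a ∂μ ≤ ∑ i, ∫ a in s i, f a ∂μ := by
  rw [← integral_finsetSum_measure fun i _ => hf i, ← Measure.sum_fintype]
  refine integral_mono_measure Measure.restrict_iUnion_le (Filter.Eventually.of_forall hf0) ?_
  rw [Measure.sum_fintype]
  exact integrable_finsetSum_measure.2 fun i _ => hf i

variable {X : ι → Type*} [∀ i, MeasurableSpace (X i)] {μ : ∀ i, Measure (X i)}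
  [∀ i, SigmaFinite (μ i)]

lemma setIntegral_univ_pi_prod {𝕜 : Type*} [RCLike 𝕜] (f : ∀ i, X i → 𝕜) (s : ∀ i, Set (X i)) :
    ∫ x in Set.univ.pi s, ∏ i, f i (x i) ∂Measure.pi μ = ∏ i, ∫ a in s i, f i a ∂μ i := by
  rw [Measure.restrict_pi_pi, integral_fintype_prod_eq_prod]

variable {f : ∀ i, X i → ℝ}

lemma setIntegral_eval_preimage_prod_le (hf0 : ∀ i, 0 ≤ f i) (hf1 : ∀ i, ∫ a, f i a ∂μ i ≤ 1)
    (k : ι) (B : Set (X k)) :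
    ∫ x in Function.eval k ⁻¹' B, ∏ i, f i (x i) ∂Measure.pi μ ≤ ∫ a in B, f k a ∂μ k := by
  classical
  rw [← Set.univ_pi_update_univ, setIntegral_univ_pi_prod,
    ← Finset.mul_prod_erase _ _ (Finset.mem_univ k), Function.update_self]
  refine mul_le_of_le_one_right (integral_nonneg (hf0 k))
    (Finset.prod_le_one (fun i _ => integral_nonneg (hf0 i)) fun i hi => ?_)
  rw [Function.update_of_ne (Finset.ne_of_mem_erase hi), setIntegral_univ]
  exact hf1 i

lemma setIntegral_exists_mem_prod_le_sum (hf0 : ∀ i, 0 ≤ f i) (hf : ∀ i, Integrable (f i) (μ i))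
    (hf1 : ∀ i, ∫ a, f i a ∂μ i ≤ 1) (B : ∀ i, Set (X i)) :
    ∫ x in {x | ∃ k, x k ∈ B k}, ∏ i, f i (x i) ∂Measure.pi μ ≤ ∑ k, ∫ a in B k, f k a ∂μ k := by
  rw [Set.ofPred_exists]
  exact (setIntegral_iUnion_le_sum (fun x => Finset.prod_nonneg fun i _ => hf0 i (x i))
    fun _ => (Integrable.fintype_prod_dep hf).integrableOn).trans
    (Finset.sum_le_sum fun k _ => setIntegral_eval_preimage_prod_le hf0 hf1 k (B k))

end ProductMeasure

section EuclideanProduct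

variable {ι : Type*} [Fintype ι] {f : ι → ℝ → ℝ}

lemma integrable_euclideanSpace_prod (hf : ∀ i, Integrable (f i)) :
    Integrable fun z : EuclideanSpace ℝ ι => ∏ i, f i (z i) :=
  (PiLp.volume_preserving_ofLp ι).integrable_comp_of_integrable (Integrable.fintype_prod hf)

lemma setIntegral_euclideanSpace_exists_mem_prod_le_sum (hf0 : ∀ i, 0 ≤ f i)
    (hf : ∀ i, Integrable (f i)) (hf1 : ∀ i, ∫ u, f i u ≤ 1) (B : ι → Set ℝ) :
    ∫ z in {z : EuclideanSpace ℝ ι | ∃ k, z k ∈ B k}, ∏ i, f i (z i) ≤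
      ∑ k, ∫ u in B k, f k u := by
  refine le_of_eq_of_le ?_ (setIntegral_exists_mem_prod_le_sum hf0 hf hf1 B)
  exact (PiLp.volume_preserving_ofLp ι).setIntegral_preimage_emb
    (MeasurableEquiv.toLp 2 (ι → ℝ)).symm.measurableEmbedding
    (fun y => ∏ i, f i (y i)) {y | ∃ k, y k ∈ B k}

end EuclideanProduct

lemma setIntegral_rpow_le_of_subset_Ioc {r d : ℝ} (hr : -1 < r) (hd : 0 ≤ d) {s : Set ℝ}
    (hs : s ⊆ Set.Ioc 0 d) : ∫ u in s, u ^ r ≤ d ^ (r + 1) / (r + 1) := by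
  have hval : ∫ u in Set.Ioc 0 d, u ^ r = d ^ (r + 1) / (r + 1) := by
    rw [← intervalIntegral.integral_of_le hd, integral_rpow (Or.inl hr),
      Real.zero_rpow (by linarith), sub_zero]
  rw [← hval]
  refine setIntegral_mono_set (intervalIntegral.intervalIntegrable_rpow' hr).1 ?_ hs.eventuallyLE
  exact ae_restrict_of_forall_mem measurableSet_Ioc fun u hu => Real.rpow_nonneg hu.1.le r

-- Unlike `u ^ r`, the power `u ^ (r + 1)` is increasing for all `r ≥ -1`, so trading `u ^ r` for
-- `u ^ (r + 1) / u` avoids a case split on the sign of `r`.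
lemma rpow_add_one_div_le_rpow {a b u r : ℝ} (ha : 0 < a) (hau : a ≤ u) (hub : u ≤ b)
    (hr : -1 ≤ r) : a ^ (r + 1) / b ≤ u ^ r := by
  have hu : 0 < u := ha.trans_le hau
  calc a ^ (r + 1) / b ≤ u ^ (r + 1) / u := by
        have : 0 ≤ r + 1 := by linarith
        gcongr
    _ = u ^ r := by rw [Real.rpow_add_one hu.ne', mul_div_cancel_right₀ _ hu.ne']

section NormalizedWeight

/-- The interval `(x-s,x+s) ∩ (0,∞)`, the ball of radius `s` about `x` in the half-line. -/
def halfLineBall (x s : ℝ) : Set ℝ :=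
  Set.Ioo (x - s) (x + s) ∩ Set.Ioi 0

/-- The weight `u^{2λ}` on `(x-s,x+s) ∩ (0,∞)`, extended by zero and divided by its mass
`V_s^{λ,+}(x)`. -/
noncomputable def normalizedWeight (l x s : ℝ) : ℝ → ℝ :=
  (halfLineBall x s).indicator fun u => u ^ (2 * l) / Vplus l x s

variable {l x s d : ℝ}

lemma measurableSet_halfLineBall (x s : ℝ) : MeasurableSet (halfLineBall x s) :=
  measurableSet_Ioo.inter measurableSet_Ioi

lemma integrableOn_rpow_halfLineBall (hl : -1 / 2 < l) :
    IntegrableOn (fun u : ℝ => u ^ (2 * l)) (halfLineBall x s) :=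
  (intervalIntegral.intervalIntegrable_rpow' (a := 0) (b := x + s) (by linarith)).1.mono_set
    fun _ hu => ⟨hu.2, hu.1.2.le⟩

lemma Vplus_nonneg (l x s : ℝ) : 0 ≤ Vplus l x s :=
  setIntegral_nonneg (measurableSet_halfLineBall x s) fun _ hu => Real.rpow_nonneg (le_of_lt hu.2) _

lemma normalizedWeight_nonneg (l x s : ℝ) : 0 ≤ normalizedWeight l x s :=
  Set.indicator_nonneg fun _ hu =>
    div_nonneg (Real.rpow_nonneg (le_of_lt hu.2) _) (Vplus_nonneg l x s)

lemma integrable_normalizedWeight (hl : -1 / 2 < l) : Integrable (normalizedWeight l x s) :=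
  IntegrableOn.integrable_indicator ((integrableOn_rpow_halfLineBall hl).div_const _)
    (measurableSet_halfLineBall x s)

lemma setIntegral_normalizedWeight (l x s : ℝ) (B : Set ℝ) :
    ∫ u in B, normalizedWeight l x s u =
      (∫ u in B ∩ halfLineBall x s, u ^ (2 * l)) / Vplus l x s := by
  rw [normalizedWeight, setIntegral_indicator (measurableSet_halfLineBall x s), integral_div]

lemma integral_normalizedWeight_le_one (l x s : ℝ) : ∫ u, normalizedWeight l x s u ≤ 1 := by
  rw [← setIntegral_univ, setIntegral_normalizedWeight, Set.univ_inter]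
  exact div_self_le_one (Vplus l x s)

lemma le_Vplus (hl : -1 / 2 < l) (hx : 0 ≤ x) (hs : 0 < s) :
    (s / 2) ^ (2 * l + 1) / (x + s) * (s / 2) ≤ Vplus l x s := by
  have hsub : Set.Ioo (x + s / 2) (x + s) ⊆ halfLineBall x s :=
    fun u hu => ⟨⟨by linarith [hu.1], hu.2⟩, show 0 < u by linarith [hu.1]⟩
  have hint := integrableOn_rpow_halfLineBall (x := x) (s := s) hl
  calc (s / 2) ^ (2 * l + 1) / (x + s) * (s / 2)
      = ∫ _ in Set.Ioo (x + s / 2) (x + s), (s / 2) ^ (2 * l + 1) / (x + s) := by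
        rw [setIntegral_const, Real.volume_real_Ioo_of_le (by linarith), smul_eq_mul]
        ring
    _ ≤ ∫ u in Set.Ioo (x + s / 2) (x + s), u ^ (2 * l) :=
        setIntegral_mono_on (integrableOn_const (by simp)) (hint.mono_set hsub) measurableSet_Ioo
          fun u hu => rpow_add_one_div_le_rpow (by positivity) (by linarith [hu.1]) hu.2.le
            (by linarith)
    _ ≤ Vplus l x s :=
        setIntegral_mono_set hint (ae_restrict_of_forall_mem (measurableSet_halfLineBall x s)
          fun u hu => Real.rpow_nonneg (le_of_lt hu.2) _) hsub.eventuallyLE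

lemma setIntegral_Iic_normalizedWeight_eq_zero (hd : d ≤ x - s) :
    ∫ u in Set.Iic d, normalizedWeight l x s u = 0 := by
  have hempty : Set.Iic d ∩ halfLineBall x s = ∅ :=
    Set.disjoint_iff_inter_eq_empty.1 <| Set.disjoint_left.2 fun u hud hu =>
      (hd.trans_lt hu.1.1).not_ge hud
  rw [setIntegral_normalizedWeight, hempty, setIntegral_empty, zero_div]

lemma setIntegral_Iic_normalizedWeight_le (hl : -1 / 2 < l) (hx : 0 ≤ x) (hs : 0 < s) (hd : 0 ≤ d)
    (hds : d ≤ s) :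
    ∫ u in Set.Iic d, normalizedWeight l x s u ≤
      6 * 2 ^ (2 * l + 1) / (2 * l + 1) * (d / s) ^ (2 * l + 1) := by
  have hl' : 0 < 2 * l + 1 := by linarith
  rcases le_total d (x - s) with hdx | hxd
  · rw [setIntegral_Iic_normalizedWeight_eq_zero hdx]
    positivity
  have hV : (s / 2) ^ (2 * l + 1) / 6 ≤ Vplus l x s :=
    calc (s / 2) ^ (2 * l + 1) / 6 = (s / 2) ^ (2 * l + 1) / (3 * s) * (s / 2) := by
          field_simp
          norm_num
      _ ≤ (s / 2) ^ (2 * l + 1) / (x + s) * (s / 2) := by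
          gcongr
          linarith
      _ ≤ Vplus l x s := le_Vplus hl hx hs
  calc ∫ u in Set.Iic d, normalizedWeight l x s u
      = (∫ u in Set.Iic d ∩ halfLineBall x s, u ^ (2 * l)) / Vplus l x s :=
        setIntegral_normalizedWeight l x s _
    _ ≤ d ^ (2 * l + 1) / (2 * l + 1) / ((s / 2) ^ (2 * l + 1) / 6) :=
        div_le_div₀ (by positivity)
          (setIntegral_rpow_le_of_subset_Ioc (by linarith) hd fun u hu => ⟨hu.2.2, hu.1⟩)
          (by positivity) hV
    _ = 6 * 2 ^ (2 * l + 1) / (2 * l + 1) * (d / s) ^ (2 * l + 1) := by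
        rw [Real.div_rpow hs.le zero_le_two, Real.div_rpow hd hs.le]
        field_simp

lemma exists_setIntegral_Iic_normalizedWeight_le (hl : -1 / 2 < l) :
    ∃ K, 0 < K ∧ ∀ {x s d γ : ℝ}, 0 ≤ x → 0 < s → 0 ≤ d → 0 ≤ γ → γ ≤ l + 1 / 2 →
      ∫ u in Set.Iic d, normalizedWeight l x s u ≤ K * (d / s) ^ (2 * γ) := by
  refine ⟨max 1 (6 * 2 ^ (2 * l + 1) / (2 * l + 1)), by positivity,
    fun {x s d γ} hx hs hd hγ0 hγl => ?_⟩
  rcases le_total s d with hsd | hds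
  · calc ∫ u in Set.Iic d, normalizedWeight l x s u
        ≤ ∫ u, normalizedWeight l x s u :=
          setIntegral_le_integral (integrable_normalizedWeight hl)
            (Filter.Eventually.of_forall (normalizedWeight_nonneg l x s))
      _ ≤ 1 := integral_normalizedWeight_le_one l x s
      _ ≤ _ := one_le_mul_of_one_le_of_one_le (le_max_left _ _)
          (Real.one_le_rpow ((one_le_div hs).2 hsd) (by linarith))
  · calc ∫ u in Set.Iic d, normalizedWeight l x s u
        ≤ 6 * 2 ^ (2 * l + 1) / (2 * l + 1) * (d / s) ^ (2 * l + 1) :=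
          setIntegral_Iic_normalizedWeight_le hl hx hs hd hds
      _ ≤ max 1 (6 * 2 ^ (2 * l + 1) / (2 * l + 1)) * (d / s) ^ (2 * γ) :=
          mul_le_mul (le_max_right _ _)
            (Real.rpow_le_rpow_of_exponent_ge' (by positivity) ((div_le_one hs).2 hds)
              (by linarith) (by linarith))
            (by positivity) (by positivity)

end NormalizedWeight

section Crossing

variable {n : ℕ}

/-- The displacements `z` that keep `x` inside the orthant `(0,∞)^n` but move `x'` out of it. -/
def crossingSet (x x' : EuclideanSpace ℝ (Fin n)) : Set (EuclideanSpace ℝ (Fin n)) :=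
  {z | (∀ j, 0 < x j + z j) ∧ ¬ (∀ j, 0 < x' j + z j)}

variable {l : Fin n → ℝ} {x x' z : EuclideanSpace ℝ (Fin n)} {t : ℝ}

lemma exists_add_apply_le_norm_sub_of_mem_crossingSet (hz : z ∈ crossingSet x x') :
    ∃ k, (x + z) k ≤ ‖x - x'‖ := by
  obtain ⟨k, hk⟩ := not_forall.1 hz.2
  refine ⟨k, ?_⟩
  calc (x + z) k ≤ (x - x') k := by simp only [PiLp.add_apply, PiLp.sub_apply]; linarith
    _ ≤ ‖(x - x') k‖ := Real.le_norm_self _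
    _ ≤ ‖x - x'‖ := PiLp.norm_apply_le (x - x') k

lemma Xi_eq_prod_normalizedWeight (hz : z ∈ Metric.ball 0 √t) (hpos : ∀ j, 0 < x j + z j) :
    Xi l x z t = ∏ j, normalizedWeight (l j) (x j) √t ((x + z) j) := by
  refine Finset.prod_congr rfl fun j _ => ?_
  have hj : |z j| < √t := (PiLp.norm_apply_le z j).trans_lt (mem_ball_zero_iff.1 hz)
  obtain ⟨hlo, hhi⟩ := abs_lt.1 hj
  have hmem : x j + z j ∈ halfLineBall (x j) √t := ⟨⟨by linarith, by linarith⟩, hpos j⟩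
  rw [normalizedWeight, PiLp.add_apply, Set.indicator_of_mem hmem]

lemma setIntegral_indicator_crossingSet_Xi_le (hl : ∀ j, -1 / 2 < l j) :
    ∫ z in Metric.ball 0 √t, (crossingSet x x').indicator (fun z => Xi l x z t) z ≤
      ∫ u in {u : EuclideanSpace ℝ (Fin n) | ∃ k, u k ∈ Set.Iic ‖x - x'‖},
        ∏ j, normalizedWeight (l j) (x j) √t (u j) := by
  set F : EuclideanSpace ℝ (Fin n) → ℝ := fun u => ∏ j, normalizedWeight (l j) (x j) √t (u j)
  set S : Set (EuclideanSpace ℝ (Fin n)) := {u | ∃ k, u k ∈ Set.Iic ‖x - x'‖}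
  have hF0 : 0 ≤ F := fun u => Finset.prod_nonneg fun j _ => normalizedWeight_nonneg _ _ _ (u j)
  have hF : Integrable F :=
    integrable_euclideanSpace_prod fun j => integrable_normalizedWeight (hl j)
  have hS : MeasurableSet S := by measurability
  have hXi {z} (hz : z ∈ Metric.ball 0 √t ∩ crossingSet x x') : Xi l x z t = F (x + z) :=
    Xi_eq_prod_normalizedWeight hz.1 hz.2.1
  rw [← integral_indicator measurableSet_ball, Set.indicator_indicator]
  calc ∫ z, (Metric.ball 0 √t ∩ crossingSet x x').indicator (fun z => Xi l x z t) z
      ≤ ∫ z, S.indicator F (x + z) := by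
        refine integral_mono_of_nonneg (Filter.Eventually.of_forall ?_)
          ((hF.indicator hS).comp_add_left x) (Filter.Eventually.of_forall ?_)
        · exact Set.indicator_nonneg fun z hz => (hXi hz).symm ▸ hF0 (x + z)
        · refine fun z => Set.indicator_apply_le' (fun hz => ?_)
            fun _ => Set.indicator_nonneg (fun u _ => hF0 u) _
          have hzS : x + z ∈ S := exists_add_apply_le_norm_sub_of_mem_crossingSet hz.2
          exact (hXi hz).trans_le (Set.indicator_of_mem hzS F).ge
    _ = ∫ u, S.indicator F u := integral_add_left_eq_self _ x
    _ = ∫ u in S, F u := integral_indicator hS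

end Crossing

theorem stmt15_general {n : ℕ} (l : Fin n → ℝ) (hl : ∀ j, -1 / 2 < l j) :
    ∃ C : ℝ, 0 < C ∧
      ∀ γ : ℝ, 0 ≤ γ → (∀ k, γ ≤ l k + 1 / 2) →
      ∀ (x x' : EuclideanSpace ℝ (Fin n)) (t : ℝ), (∀ j, 0 ≤ x j) → 0 < t →
        ∫ z in Metric.ball (0 : EuclideanSpace ℝ (Fin n)) √t,
            (crossingSet x x').indicator (fun z => Xi l x z t) z ≤
          C * (‖x - x'‖ ^ 2 / t) ^ γ := by
  choose K hK0 hK using fun k => exists_setIntegral_Iic_normalizedWeight_le (hl k)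
  have hsum : 0 ≤ ∑ k, K k := Finset.sum_nonneg fun k _ => (hK0 k).le
  refine ⟨1 + ∑ k, K k, by positivity, fun γ hγ0 hγl x x' t hx ht => ?_⟩
  have hpow : (‖x - x'‖ ^ 2 / t) ^ γ = (‖x - x'‖ / √t) ^ (2 * γ) := by
    rw [Real.rpow_mul (by positivity), Real.rpow_two, div_pow, Real.sq_sqrt ht.le]
  calc _ ≤ ∫ u in {u : EuclideanSpace ℝ (Fin n) | ∃ k, u k ∈ Set.Iic ‖x - x'‖},
          ∏ j, normalizedWeight (l j) (x j) √t (u j) := setIntegral_indicator_crossingSet_Xi_le hl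
    _ ≤ ∑ k, ∫ u in Set.Iic ‖x - x'‖, normalizedWeight (l k) (x k) √t u :=
        setIntegral_euclideanSpace_exists_mem_prod_le_sum
          (fun j => normalizedWeight_nonneg (l j) (x j) √t)
          (fun j => integrable_normalizedWeight (hl j))
          (fun j => integral_normalizedWeight_le_one (l j) (x j) √t) _
    _ ≤ ∑ k, K k * (‖x - x'‖ / √t) ^ (2 * γ) :=
        Finset.sum_le_sum fun k _ =>
          hK k (hx k) (Real.sqrt_pos.2 ht) (norm_nonneg _) hγ0 (hγl k)
    _ = (∑ k, K k) * (‖x - x'‖ ^ 2 / t) ^ γ := by rw [← Finset.sum_mul, hpow]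
    _ ≤ (1 + ∑ k, K k) * (‖x - x'‖ ^ 2 / t) ^ γ := by
        gcongr
        exact le_add_of_nonneg_left zero_le_one

theorem stmt15 {n : ℕ} (l : Fin n → ℝ) (hl : ∀ j, -1/2 < l j)
    (γ : ℝ) (hγ0 : 0 < γ) (hγ1 : γ ≤ 1/2) (hγl : ∀ k, γ ≤ l k + 1/2) :
    ∃ C : ℝ, 0 < C ∧
      ∀ (x x' : EuclideanSpace ℝ (Fin n)) (t : ℝ),
        (∀ j, 0 < x j) → (∀ j, 0 < x' j) → 0 < t →
        (∫ z in Metric.ball (0 : EuclideanSpace ℝ (Fin n)) (Real.sqrt t),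
            Set.indicator {z : EuclideanSpace ℝ (Fin n) |
                (∀ j, 0 < x j + z j) ∧ ¬ (∀ j, 0 < x' j + z j)}
              (fun z => Xi l x z t) z) ≤
          C * (‖x - x'‖ ^ 2 / t) ^ γ := by
  obtain ⟨C, hC, h⟩ := stmt15_general l hl
  exact ⟨C, hC, fun x x' t hx _ ht => h γ hγ0.le hγl x x' t (fun j => (hx j).le) ht⟩
end

section
/- Let λ ∈ (−1/2, ∞)^n. Then there exists γ = γ(λ) ∈ (0, 1/2] with γ < min_{1≤k≤n}(λ_k + 1/2), and a constant C > 0, such that for all x, x' ∈ (0,∞)^n and t > 0: ∫_{|z|<√t} χ_{{x+z, x'+z ∈ (0,∞)^n}} |√(Ξ_λ(x,z,t)) − √(Ξ_λ(x',z,t))|² dz ≤ C·(|x−x'|²/t)^γ, where Ξ_λ(x,z,t) = Π_{j=1}^n (x_j+z_j)^{2λ_j}/V_{√t}^{λ_j,+}(x_j). -/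
open MeasureTheory
open scoped BigOperators

/-!
Since `|√a - √b|² ≤ |a - b|`, the integral is at most the `L¹` distance of `Ξ_λ(x, ·, t)` and
`Ξ_λ(x', ·, t)`. Extended by zero, each is a product of one-dimensional probability densities, so
telescoping bounds this distance by the sum of the `L¹` distances of the factors.

In one variable, for `0 < a ≤ b`, renormalising costs a factor `2`, and the weights `(a + u)^{2λ}`
and `(b + u)^{2λ}` on their windows differ in `L¹` by integrals of `v^{2λ}` over intervals of
length `b - a` (the power is monotone, so the integral of the absolute difference telescopes).
Dilation turns an interval of length `b - a` into one of length `s`, which gains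
`max ((b - a) / s) (((b - a) / s)^{2λ + 1})`. For `b - a ≤ s` this is at most `((b - a) / s)^{2γ}`
when `2γ ≤ min 1 (2λ + 1)`, and for `b - a ≥ s` the trivial bound `2` suffices.
-/

open Set

theorem abs_sqrt_sub_sqrt_sq_le {a b : ℝ} (ha : 0 ≤ a) (hb : 0 ≤ b) :
    |√a - √b| ^ 2 ≤ |a - b| :=
  calc |√a - √b| ^ 2 = |√a - √b| * |√a - √b| := sq _
    _ ≤ |√a - √b| * (√a + √b) := by
      gcongr
      exact (abs_sub _ _).trans_eq (by simp [abs_of_nonneg])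
    _ = |√a ^ 2 - √b ^ 2| := by
      rw [sq_sub_sq, abs_mul, abs_of_nonneg (a := √a + √b) (by positivity), mul_comm]
    _ = |a - b| := by rw [Real.sq_sqrt ha, Real.sq_sqrt hb]

section ProbDensity

variable {α : Type*} [MeasurableSpace α] {μ : Measure α} {f g : α → ℝ}

/-- Real-valued probability densities with respect to `μ`. Integrability is not a field: the Bochner
integral of a non-integrable function is `0`, so it follows from `integral_eq_one`. -/
structure IsProbDensity (f : α → ℝ) (μ : Measure α) : Prop where
  nonneg : ∀ z, 0 ≤ f z
  integral_eq_one : ∫ z, f z ∂μ = 1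

theorem IsProbDensity.integrable (hf : IsProbDensity f μ) : Integrable f μ :=
  .of_integral_ne_zero (by simp [hf.integral_eq_one])

theorem IsProbDensity.integral_abs_sub_le_two (hf : IsProbDensity f μ) (hg : IsProbDensity g μ) :
    ∫ z, |f z - g z| ∂μ ≤ 2 :=
  calc ∫ z, |f z - g z| ∂μ ≤ ∫ z, (f z + g z) ∂μ :=
      integral_mono (hf.integrable.sub hg.integrable).abs (hf.integrable.add hg.integrable)
        fun z => (abs_sub _ _).trans_eq (by rw [abs_of_nonneg (hf.nonneg z),
          abs_of_nonneg (hg.nonneg z)])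
    _ = 2 := by
      rw [integral_add hf.integrable hg.integrable, hf.integral_eq_one, hg.integral_eq_one]
      norm_num

theorem integral_abs_div_integral_sub_le (hf : 0 < ∫ z, f z ∂μ) (hg : 0 < ∫ z, g z ∂μ)
    (hg0 : ∀ z, 0 ≤ g z) :
    ∫ z, |f z / (∫ y, f y ∂μ) - g z / ∫ y, g y ∂μ| ∂μ ≤
      2 * (∫ z, |f z - g z| ∂μ) / ∫ z, f z ∂μ := by
  have hfi : Integrable f μ := .of_integral_ne_zero hf.ne'
  have hgi : Integrable g μ := .of_integral_ne_zero hg.ne'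
  have hmass : |(∫ z, f z ∂μ) - ∫ z, g z ∂μ| ≤ ∫ z, |f z - g z| ∂μ := by
    rw [← integral_sub hfi hgi]
    exact abs_integral_le_integral_abs
  set F := ∫ z, f z ∂μ
  set G := ∫ z, g z ∂μ with hG
  have hpt (z : α) : |f z / F - g z / G| ≤ |f z - g z| / F + g z * (|F - G| / (F * G)) :=
    calc |f z / F - g z / G| = |(f z - g z) / F - g z * ((F - G) / (F * G))| := by
          congr 1
          field_simp
          ring
      _ ≤ |(f z - g z) / F| + |g z * ((F - G) / (F * G))| := abs_sub _ _
      _ = |f z - g z| / F + g z * (|F - G| / (F * G)) := by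
        rw [abs_div, abs_mul, abs_div, abs_of_pos hf, abs_of_nonneg (hg0 z),
          abs_of_pos (mul_pos hf hg)]
  calc ∫ z, |f z / F - g z / G| ∂μ
      ≤ ∫ z, (|f z - g z| / F + g z * (|F - G| / (F * G))) ∂μ :=
        integral_mono ((hfi.div_const F).sub (hgi.div_const G)).abs
          (((hfi.sub hgi).abs.div_const F).add (hgi.mul_const _)) hpt
    _ = ((∫ z, |f z - g z| ∂μ) + |F - G|) / F := by
        have hsub : Integrable (fun z => |f z - g z| / F) μ := (hfi.sub hgi).abs.div_const F
        rw [integral_add hsub (hgi.mul_const _), integral_div, integral_mul_const, ← hG]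
        field_simp
    _ ≤ 2 * (∫ z, |f z - g z| ∂μ) / F := by
        gcongr
        linarith

end ProbDensity

section Product

variable {ι : Type*} [LinearOrder ι]

/-- The `i`-th factor of the `k`-th term in the telescoping bound for `|∏ i, x i - ∏ i, y i|`:
the factors of the first product before `k`, the difference at `k`, those of the second after. -/
def telescopingFactor (k i : ι) (x y : ℝ) : ℝ :=
  if i < k then x else if i = k then |x - y| else y

theorem prod_telescopingFactor [Fintype ι] (k : ι) (x y : ι → ℝ) :
    ∏ i, telescopingFactor k i (x i) (y i) =
      |x k - y k| * (∏ i with i < k, x i) * ∏ i with k < i, y i := by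
  rw [Finset.prod_filter, Finset.prod_filter,
    ← Fintype.prod_ite_eq' k fun i => |x i - y i|, ← Finset.prod_mul_distrib,
    ← Finset.prod_mul_distrib]
  refine Finset.prod_congr rfl fun i _ => ?_
  rcases lt_trichotomy i k with h | rfl | h
  · simp [telescopingFactor, h, h.ne, h.not_gt]
  · simp [telescopingFactor]
  · simp [telescopingFactor, h, h.ne', h.not_gt]

theorem abs_prod_sub_prod_le [Fintype ι] {x y : ι → ℝ} (hx : ∀ i, 0 ≤ x i) (hy : ∀ i, 0 ≤ y i) :
    |∏ i, x i - ∏ i, y i| ≤ ∑ k, ∏ i, telescopingFactor k i (x i) (y i) := by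
  have htel := Finset.prod_add_ordered Finset.univ y fun i => x i - y i
  simp only [add_sub_cancel] at htel
  rw [htel, add_sub_cancel_left]
  refine (Finset.abs_sum_le_sum_abs _ _).trans_eq (Finset.sum_congr rfl fun k _ => ?_)
  rw [prod_telescopingFactor, abs_mul, abs_mul, abs_of_nonneg (Finset.prod_nonneg fun i _ => hx i),
    abs_of_nonneg (Finset.prod_nonneg fun i _ => hy i)]

section Integral

variable {α : Type*} [MeasurableSpace α] {μ : Measure α} {f g : α → ℝ}

theorem integrable_telescopingFactor (hf : Integrable f μ) (hg : Integrable g μ) (k i : ι) :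
    Integrable (fun z => telescopingFactor k i (f z) (g z)) μ := by
  unfold telescopingFactor
  split_ifs
  exacts [hf, (hf.sub hg).abs, hg]

theorem integral_telescopingFactor_of_ne (hf : IsProbDensity f μ) (hg : IsProbDensity g μ)
    {k i : ι} (hik : i ≠ k) : ∫ z, telescopingFactor k i (f z) (g z) ∂μ = 1 := by
  simp only [telescopingFactor, if_neg hik]
  split_ifs
  exacts [hf.integral_eq_one, hg.integral_eq_one]

end Integral

variable [Fintype ι] {α : ι → Type*} [∀ i, MeasurableSpace (α i)] {μ : ∀ i, Measure (α i)}
  [∀ i, SigmaFinite (μ i)] {f g : ∀ i, α i → ℝ}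

theorem integral_prod_telescopingFactor (hf : ∀ i, IsProbDensity (f i) (μ i))
    (hg : ∀ i, IsProbDensity (g i) (μ i)) (k : ι) :
    ∫ z, ∏ i, telescopingFactor k i (f i (z i)) (g i (z i)) ∂Measure.pi μ =
      ∫ u, |f k u - g k u| ∂μ k := by
  rw [integral_fintype_prod_eq_prod fun i u => telescopingFactor k i (f i u) (g i u),
    Fintype.prod_eq_single k fun i hik => integral_telescopingFactor_of_ne (hf i) (hg i) hik]
  simp [telescopingFactor]

theorem integral_abs_prod_sub_prod_le (hf : ∀ i, IsProbDensity (f i) (μ i))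
    (hg : ∀ i, IsProbDensity (g i) (μ i)) :
    ∫ z, |∏ i, f i (z i) - ∏ i, g i (z i)| ∂Measure.pi μ ≤ ∑ k, ∫ u, |f k u - g k u| ∂μ k := by
  have hfi := fun i => (hf i).integrable
  have hgi := fun i => (hg i).integrable
  have hterm (k : ι) : Integrable
      (fun z : ∀ i, α i => ∏ i, telescopingFactor k i (f i (z i)) (g i (z i))) (Measure.pi μ) :=
    .fintype_prod_dep fun i => integrable_telescopingFactor (hfi i) (hgi i) k i
  calc ∫ z, |∏ i, f i (z i) - ∏ i, g i (z i)| ∂Measure.pi μ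
      ≤ ∫ z, ∑ k, ∏ i, telescopingFactor k i (f i (z i)) (g i (z i)) ∂Measure.pi μ :=
        integral_mono ((Integrable.fintype_prod_dep hfi).sub (.fintype_prod_dep hgi)).abs
          (integrable_finsetSum _ fun k _ => hterm k)
          fun z => abs_prod_sub_prod_le (fun i => (hf i).nonneg _) fun i => (hg i).nonneg _
    _ = ∑ k, ∫ u, |f k u - g k u| ∂μ k := by
        rw [integral_finsetSum _ fun k _ => hterm k]
        exact Finset.sum_congr rfl fun k _ => integral_prod_telescopingFactor hf hg k

end Product

theorem integral_abs_sub_comp_add_right {f : ℝ → ℝ} {m e d : ℝ} (hme : m ≤ e) (hd : 0 ≤ d)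
    (hf : ∀ x y, IntervalIntegrable f volume x y)
    (hmono : MonotoneOn f (Ioi m) ∨ AntitoneOn f (Ioi m)) :
    ∫ v in m..e, |f v - f (v + d)| =
      |(∫ v in m..m + d, f v) - ∫ v in e..e + d, f v| := by
  have hshift : (∫ v in m..m + d, f v) - ∫ v in e..e + d, f v =
      ∫ v in m..e, (f v - f (v + d)) := by
    have hfd : IntervalIntegrable (fun v => f (v + d)) volume m e := by
      simpa using (hf (m + d) (e + d)).comp_add_right d
    rw [intervalIntegral.integral_sub (hf _ _) hfd, intervalIntegral.integral_comp_add_right,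
      intervalIntegral.integral_interval_sub_interval_comm (hf _ _) (hf _ _) (hf _ _)]
  have hmem {v : ℝ} (hv : v ∈ uIoo m e) : v ∈ Ioi m ∧ v + d ∈ Ioi m ∧ v ≤ v + d := by
    rw [uIoo_of_le hme] at hv
    exact ⟨hv.1, by simp only [mem_Ioi]; linarith [hv.1], by linarith⟩
  have habs_nonneg : 0 ≤ ∫ v in m..e, |f v - f (v + d)| :=
    intervalIntegral.integral_nonneg hme fun _ _ => abs_nonneg _
  rw [hshift]
  rcases hmono with hf | hf
  · have habs : ∫ v in m..e, |f v - f (v + d)| = -∫ v in m..e, (f v - f (v + d)) := by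
      rw [← intervalIntegral.integral_neg]
      exact intervalIntegral.integral_congr_uIoo fun v hv =>
        abs_of_nonpos (sub_nonpos.2 (hf (hmem hv).1 (hmem hv).2.1 (hmem hv).2.2))
    rw [← abs_neg, ← habs, abs_of_nonneg habs_nonneg]
  · have habs : ∫ v in m..e, |f v - f (v + d)| = ∫ v in m..e, (f v - f (v + d)) :=
      intervalIntegral.integral_congr_uIoo fun v hv =>
        abs_of_nonneg (sub_nonneg.2 (hf (hmem hv).1 (hmem hv).2.1 (hmem hv).2.2))
    rw [← habs, abs_of_nonneg habs_nonneg]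

section Rpow

variable {p : ℝ}

theorem integral_rpow_nonneg {x y : ℝ} (hx : 0 ≤ x) (hxy : x ≤ y) : 0 ≤ ∫ u in x..y, u ^ p :=
  intervalIntegral.integral_nonneg hxy fun _ hu => Real.rpow_nonneg (hx.trans hu.1) _

theorem integral_rpow_mono_interval (hp : -1 < p) {x x' y' y : ℝ} (hx : 0 ≤ x) (hxx' : x ≤ x')
    (hxy' : x' ≤ y') (hyy' : y' ≤ y) : ∫ u in x'..y', u ^ p ≤ ∫ u in x..y, u ^ p := by
  refine intervalIntegral.integral_mono_interval hxx' hxy' hyy' ?_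
    (intervalIntegral.intervalIntegrable_rpow' hp)
  filter_upwards [ae_restrict_mem measurableSet_Ioc] with u hu
  exact Real.rpow_nonneg (hx.trans hu.1.le) _

theorem monotoneOn_or_antitoneOn_rpow_Ioi {m : ℝ} (hm : 0 ≤ m) :
    MonotoneOn (fun u : ℝ => u ^ p) (Ioi m) ∨ AntitoneOn (fun u : ℝ => u ^ p) (Ioi m) :=
  (le_total 0 p).imp
    (fun h => (Real.monotoneOn_rpow_Ici_of_exponent_nonneg h).mono fun _ hu => hm.trans hu.le)
    fun h => (Real.antitoneOn_rpow_Ioi_of_exponent_nonpos h).mono (Ioi_subset_Ioi hm)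

theorem intervalIntegrable_add_rpow (hp : -1 < p) (c x y : ℝ) :
    IntervalIntegrable (fun u : ℝ => (c + u) ^ p) volume x y := by
  simpa using
    (intervalIntegral.intervalIntegrable_rpow' (a := c + x) (b := c + y) hp).comp_add_left c

theorem rpow_add_mul_le {c m y : ℝ} (hc : 0 < c) (hm : 0 ≤ m) (hy : 0 < y) :
    (m + c * y) ^ p ≤ max 1 (c ^ p) * (m + y) ^ p := by
  have hmy : 0 < m + y := by linarith
  have hcy : 0 < c * y := mul_pos hc hy
  have hdil : (c * (m + y)) ^ p = c ^ p * (m + y) ^ p := Real.mul_rpow hc.le hmy.le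
  rw [max_mul_of_nonneg _ _ (by positivity), one_mul, ← hdil, le_max_iff]
  rcases le_total 0 p with h0 | h0 <;> rcases le_total c 1 with h1 | h1
  · exact .inl (Real.rpow_le_rpow (by linarith) (by nlinarith) h0)
  · exact .inr (Real.rpow_le_rpow (by linarith) (by nlinarith) h0)
  · exact .inr (Real.rpow_le_rpow_of_nonpos (by positivity) (by nlinarith) h0)
  · exact .inl (Real.rpow_le_rpow_of_nonpos (by positivity) (by nlinarith) h0)

theorem integral_rpow_add_mul_le (hp : -1 < p) {c m s : ℝ} (hc : 0 ≤ c) (hm : 0 ≤ m)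
    (hs : 0 ≤ s) :
    ∫ u in m..m + c * s, u ^ p ≤ max c (c ^ (p + 1)) * ∫ u in m..m + s, u ^ p := by
  rcases hc.eq_or_lt with rfl | hc
  · simp [Real.zero_rpow (by linarith : p + 1 ≠ 0)]
  have hdil (c : ℝ) : c * ∫ y in (0 : ℝ)..s, (m + c * y) ^ p = ∫ u in m..m + c * s, u ^ p := by
    rw [intervalIntegral.mul_integral_comp_add_mul (f := fun u : ℝ => u ^ p) c m, mul_zero,
      add_zero]
  have hdil_one : ∫ y in (0 : ℝ)..s, (m + y) ^ p = ∫ u in m..m + s, u ^ p := by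
    simpa only [one_mul] using hdil 1
  have hintc : IntervalIntegrable (fun y : ℝ => (m + c * y) ^ p) volume 0 s := by
    simpa [hc.ne'] using (intervalIntegrable_add_rpow hp m 0 (c * s)).comp_mul_left (c := c)
  calc ∫ u in m..m + c * s, u ^ p = c * ∫ y in (0 : ℝ)..s, (m + c * y) ^ p := (hdil c).symm
    _ ≤ c * ∫ y in (0 : ℝ)..s, max 1 (c ^ p) * (m + y) ^ p := by
      gcongr
      exact intervalIntegral.integral_mono_on_of_le_Ioo hs hintc
        ((intervalIntegrable_add_rpow hp m 0 s).const_mul _) fun y hy => rpow_add_mul_le hc hm hy.1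
    _ = max c (c ^ (p + 1)) * ∫ u in m..m + s, u ^ p := by
      rw [intervalIntegral.integral_const_mul, hdil_one, ← mul_assoc,
        mul_max_of_nonneg _ _ hc.le, mul_one, Real.rpow_add_one hc.ne', mul_comm c (c ^ p)]

end Rpow

section Window

variable {l a b s : ℝ}

/-- The numerator `u ↦ (a + u)^{2l}` of one factor of `Xi`, extended by zero off the set of
increments `u` with `|u| < s` and `0 < a + u`. -/
noncomputable def windowWeight (l a s : ℝ) : ℝ → ℝ :=
  (Ioo (-min a s) s).indicator fun u => (a + u) ^ (2 * l)

/-- One factor of `Xi` as a function of the increment, extended by zero to a probability density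
on the line. -/
noncomputable def windowDensity (l a s u : ℝ) : ℝ :=
  windowWeight l a s u / Vplus l a s

theorem mem_Ioo_neg_min_iff {u : ℝ} : u ∈ Ioo (-min a s) s ↔ |u| < s ∧ 0 < a + u := by
  rw [mem_Ioo, neg_lt, lt_min_iff, abs_lt, neg_lt (a := s), neg_lt_iff_pos_add]
  tauto

theorem windowWeight_nonneg (u : ℝ) : 0 ≤ windowWeight l a s u :=
  indicator_nonneg (fun _ hv => Real.rpow_nonneg (mem_Ioo_neg_min_iff.1 hv).2.le _) u

theorem Vplus_eq_integral (ha : 0 < a) (hs : 0 < s) :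
    Vplus l a s = ∫ u in a - min a s..a + s, u ^ (2 * l) := by
  have hmax : max (a - s) 0 = a - min a s := by
    rw [← max_sub_sub_left, sub_self, max_comm]
  have hle : a - min a s ≤ a + s := by linarith [lt_min ha hs]
  rw [Vplus, Ioo_inter_Ioi, hmax, intervalIntegral.integral_of_le hle, integral_Ioc_eq_integral_Ioo]

theorem integral_windowWeight (ha : 0 < a) (hs : 0 < s) :
    ∫ u, windowWeight l a s u = Vplus l a s := by
  have hle : -min a s ≤ s := by linarith [lt_min ha hs]
  rw [Vplus_eq_integral ha hs, windowWeight, integral_indicator measurableSet_Ioo,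
    ← integral_Ioc_eq_integral_Ioo, ← intervalIntegral.integral_of_le hle,
    intervalIntegral.integral_comp_add_left (fun v : ℝ => v ^ (2 * l)) a, ← sub_eq_add_neg]

theorem Vplus_pos (hl : -1 / 2 < l) (ha : 0 < a) (hs : 0 < s) : 0 < Vplus l a s := by
  rw [Vplus_eq_integral ha hs]
  refine intervalIntegral.intervalIntegral_pos_of_pos_on
    (intervalIntegral.intervalIntegrable_rpow' (by linarith)) (fun u hu => ?_)
    (by linarith [lt_min ha hs])
  exact Real.rpow_pos_of_pos (by linarith [hu.1, min_le_left a s]) _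

theorem isProbDensity_windowDensity (hl : -1 / 2 < l) (ha : 0 < a) (hs : 0 < s) :
    IsProbDensity (windowDensity l a s) volume where
  nonneg u := div_nonneg (windowWeight_nonneg u) (Vplus_pos hl ha hs).le
  integral_eq_one := by
    simp only [windowDensity]
    rw [integral_div, integral_windowWeight ha hs, div_self (Vplus_pos hl ha hs).ne']

theorem abs_windowWeight_sub_eq (hab : a ≤ b) (u : ℝ) :
    |windowWeight l a s u - windowWeight l b s u| =
      (Ioo (-min a s) s).indicator (fun u => |(a + u) ^ (2 * l) - (b + u) ^ (2 * l)|) u +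
        (Ioo (-min b s) s \ Ioo (-min a s) s).indicator (fun u => (b + u) ^ (2 * l)) u := by
  have hsub : Ioo (-min a s) s ⊆ Ioo (-min b s) s := by gcongr
  by_cases hua : u ∈ Ioo (-min a s) s
  · simp [windowWeight, hua, hsub hua]
  by_cases hub : u ∈ Ioo (-min b s) s
  · have hpos := (mem_Ioo_neg_min_iff.1 hub).2
    simp only [windowWeight, indicator_of_mem hub, indicator_of_notMem hua,
      indicator_of_mem (mem_sdiff_of_mem hub hua), zero_sub, zero_add, abs_neg]
    exact abs_of_pos (by positivity)
  · simp [windowWeight, hua, hub]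

theorem setIntegral_abs_sub_add_rpow (hl : -1 / 2 < l) (ha : 0 < a) (hab : a ≤ b) (hs : 0 < s) :
    ∫ u in Ioo (-min a s) s, |(a + u) ^ (2 * l) - (b + u) ^ (2 * l)| =
      |(∫ v in a - min a s..a - min a s + (b - a), v ^ (2 * l)) -
        ∫ v in a + s..a + s + (b - a), v ^ (2 * l)| := by
  have hmin : 0 < min a s := lt_min ha hs
  have hm : 0 ≤ a - min a s := sub_nonneg.2 (min_le_left a s)
  rw [← integral_abs_sub_comp_add_right (by linarith) (sub_nonneg.2 hab)
      (fun _ _ => intervalIntegral.intervalIntegrable_rpow' (by linarith))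
      (monotoneOn_or_antitoneOn_rpow_Ioi hm), sub_eq_add_neg a (min a s),
    ← intervalIntegral.integral_comp_add_left
      (fun v : ℝ => |v ^ (2 * l) - (v + (b - a)) ^ (2 * l)|) a,
    intervalIntegral.integral_of_le (by linarith), integral_Ioc_eq_integral_Ioo]
  refine setIntegral_congr_fun measurableSet_Ioo fun u _ => ?_
  rw [show a + u + (b - a) = b + u by ring]

theorem setIntegral_sdiff_add_rpow_le (hl : -1 / 2 < l) (ha : 0 < a) (hab : a ≤ b) :
    ∫ u in Ioo (-min b s) s \ Ioo (-min a s) s, (b + u) ^ (2 * l) ≤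
      ∫ v in a - min a s..a - min a s + (b - a), v ^ (2 * l) := by
  have hmono : min a s ≤ min b s := min_le_min_right s hab
  have hshift : a - min a s ≤ b - min b s := by
    rw [← max_sub_sub_left, ← max_sub_sub_left, sub_self, sub_self]
    gcongr
  have hset : Ioo (-min b s) s \ Ioo (-min a s) s = Ioc (-min b s) (-min a s) := by
    ext u
    simp only [mem_sdiff, mem_Ioo, mem_Ioc]
    grind
  rw [hset, ← intervalIntegral.integral_of_le (by linarith),
    intervalIntegral.integral_comp_add_left (fun v : ℝ => v ^ (2 * l)) b]
  exact integral_rpow_mono_interval (by linarith) (sub_nonneg.2 (min_le_left a s)) (by linarith)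
    (by linarith) (by linarith)

theorem integral_abs_windowWeight_sub_le (hl : -1 / 2 < l) (ha : 0 < a) (hab : a ≤ b)
    (hs : 0 < s) :
    ∫ u, |windowWeight l a s u - windowWeight l b s u| ≤
      2 * (∫ v in a - min a s..a - min a s + (b - a), v ^ (2 * l)) +
        ∫ v in a + s..a + s + (b - a), v ^ (2 * l) := by
  have hint (c : ℝ) : IntegrableOn (fun u => (c + u) ^ (2 * l)) (Ioo (-s) s) :=
    (intervalIntegrable_add_rpow (by linarith) c (-s) s).1.mono_set Ioo_subset_Ioc_self
  have hsub (c : ℝ) : Ioo (-min c s) s ⊆ Ioo (-s) s :=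
    Ioo_subset_Ioo_left (neg_le_neg (min_le_right c s))
  have hcommon : IntegrableOn (fun u => |(a + u) ^ (2 * l) - (b + u) ^ (2 * l)|)
      (Ioo (-min a s) s) :=
    (((hint a).sub (hint b)).mono_set (hsub a)).abs
  have hrest : IntegrableOn (fun u => (b + u) ^ (2 * l)) (Ioo (-min b s) s \ Ioo (-min a s) s) :=
    (hint b).mono_set (sdiff_subset.trans (hsub b))
  have hmeas : MeasurableSet (Ioo (-min b s) s \ Ioo (-min a s) s) :=
    measurableSet_Ioo.diff measurableSet_Ioo
  have hX : 0 ≤ ∫ v in a - min a s..a - min a s + (b - a), v ^ (2 * l) :=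
    integral_rpow_nonneg (sub_nonneg.2 (min_le_left a s)) (by linarith)
  have hY : 0 ≤ ∫ v in a + s..a + s + (b - a), v ^ (2 * l) :=
    integral_rpow_nonneg (by linarith) (by linarith)
  simp only [abs_windowWeight_sub_eq hab]
  rw [integral_add (hcommon.integrable_indicator measurableSet_Ioo)
      (hrest.integrable_indicator hmeas), integral_indicator measurableSet_Ioo,
    integral_indicator hmeas, setIntegral_abs_sub_add_rpow hl ha hab hs]
  linarith [(abs_sub _ _).trans_eq (congrArg₂ (· + ·) (abs_of_nonneg hX) (abs_of_nonneg hY)),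
    setIntegral_sdiff_add_rpow_le hl ha hab (s := s)]

theorem integral_rpow_left_le_Vplus (hl : -1 / 2 < l) (ha : 0 < a) (hs : 0 < s) {d : ℝ}
    (hd : 0 ≤ d) :
    ∫ v in a - min a s..a - min a s + d, v ^ (2 * l) ≤
      max (d / s) ((d / s) ^ (2 * l + 1)) * Vplus l a s := by
  have hmin : 0 < min a s := lt_min ha hs
  have hm : 0 ≤ a - min a s := sub_nonneg.2 (min_le_left a s)
  calc ∫ v in a - min a s..a - min a s + d, v ^ (2 * l)
      = ∫ v in a - min a s..a - min a s + d / s * s, v ^ (2 * l) := by rw [div_mul_cancel₀ d hs.ne']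
    _ ≤ max (d / s) ((d / s) ^ (2 * l + 1)) *
          ∫ v in a - min a s..a - min a s + s, v ^ (2 * l) :=
      integral_rpow_add_mul_le (by linarith) (by positivity) hm hs.le
    _ ≤ max (d / s) ((d / s) ^ (2 * l + 1)) * Vplus l a s := by
      rw [Vplus_eq_integral ha hs]
      gcongr
      exact integral_rpow_mono_interval (by linarith) hm le_rfl (by linarith) (by linarith)

theorem integral_rpow_right_le_Vplus (hl : -1 / 2 < l) (ha : 0 < a) (hs : 0 < s) {d : ℝ}
    (hd : 0 ≤ d) :
    ∫ v in a + s..a + s + d, v ^ (2 * l) ≤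
      max (d / s) ((d / s) ^ (2 * l + 1)) * (max 2 (2 ^ (2 * l + 1)) * Vplus l a s) := by
  have hp : -1 < 2 * l := by linarith
  have hmin : 0 < min a s := lt_min ha hs
  calc ∫ v in a + s..a + s + d, v ^ (2 * l)
      = ∫ v in a + s..a + s + d / s * s, v ^ (2 * l) := by rw [div_mul_cancel₀ d hs.ne']
    _ ≤ max (d / s) ((d / s) ^ (2 * l + 1)) * ∫ v in a + s..a + s + s, v ^ (2 * l) :=
      integral_rpow_add_mul_le hp (by positivity) (by positivity) hs.le
    _ ≤ max (d / s) ((d / s) ^ (2 * l + 1)) * ∫ v in a..a + 2 * s, v ^ (2 * l) := by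
      gcongr
      exact integral_rpow_mono_interval hp ha.le (by linarith) (by linarith) (by linarith)
    _ ≤ max (d / s) ((d / s) ^ (2 * l + 1)) *
          (max 2 (2 ^ (2 * l + 1)) * ∫ v in a..a + s, v ^ (2 * l)) := by
      gcongr
      exact integral_rpow_add_mul_le hp zero_le_two ha.le hs.le
    _ ≤ max (d / s) ((d / s) ^ (2 * l + 1)) * (max 2 (2 ^ (2 * l + 1)) * Vplus l a s) := by
      rw [Vplus_eq_integral ha hs]
      gcongr
      exact integral_rpow_mono_interval hp (sub_nonneg.2 (min_le_left a s)) (by linarith)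
        (by linarith) le_rfl

/-- The constant in the Hölder estimate for `a ↦ windowDensity l a s` in `L¹`; it has to be at least
`2`, the bound for base points at distance `s` or more. -/
noncomputable def holderConst (l : ℝ) : ℝ :=
  2 * (2 + max 2 (2 ^ (2 * l + 1)))

theorem two_le_holderConst (l : ℝ) : 2 ≤ holderConst l := by
  have : (2 : ℝ) ≤ max 2 (2 ^ (2 * l + 1)) := le_max_left _ _
  unfold holderConst
  linarith

theorem integral_abs_windowDensity_sub_le_max (hl : -1 / 2 < l) (ha : 0 < a) (hab : a ≤ b)
    (hs : 0 < s) :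
    ∫ u, |windowDensity l a s u - windowDensity l b s u| ≤
      holderConst l * max ((b - a) / s) (((b - a) / s) ^ (2 * l + 1)) := by
  have hb : 0 < b := ha.trans_le hab
  have hVa := Vplus_pos hl ha hs
  have hnorm := integral_abs_div_integral_sub_le (μ := volume) (f := windowWeight l a s)
    (g := windowWeight l b s)
    (by rwa [integral_windowWeight ha hs])
    (by rw [integral_windowWeight hb hs]; exact Vplus_pos hl hb hs)
    windowWeight_nonneg
  rw [integral_windowWeight ha hs, integral_windowWeight hb hs] at hnorm
  refine hnorm.trans ?_
  have hleft := integral_rpow_left_le_Vplus hl ha hs (sub_nonneg.2 hab)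
  have hright := integral_rpow_right_le_Vplus hl ha hs (sub_nonneg.2 hab)
  have hdiff := integral_abs_windowWeight_sub_le hl ha hab hs
  rw [div_le_iff₀ hVa, holderConst]
  linarith

theorem integral_abs_windowDensity_sub_le_of_le (hl : -1 / 2 < l) {θ : ℝ} (hθ0 : 0 ≤ θ)
    (hθ1 : θ ≤ 1) (hθl : θ ≤ 2 * l + 1) (ha : 0 < a) (hab : a ≤ b) (hs : 0 < s) :
    ∫ u, |windowDensity l a s u - windowDensity l b s u| ≤
      holderConst l * ((b - a) / s) ^ θ := by
  have hC := two_le_holderConst l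
  have hr : 0 ≤ (b - a) / s := div_nonneg (sub_nonneg.2 hab) hs.le
  rcases le_total ((b - a) / s) 1 with h1 | h1
  · refine (integral_abs_windowDensity_sub_le_max hl ha hab hs).trans ?_
    gcongr
    refine max_le ?_ (Real.rpow_le_rpow_of_exponent_ge' hr h1 hθ0 hθl)
    simpa using Real.rpow_le_rpow_of_exponent_ge' hr h1 hθ0 hθ1
  · calc ∫ u, |windowDensity l a s u - windowDensity l b s u| ≤ 2 :=
        (isProbDensity_windowDensity hl ha hs).integral_abs_sub_le_two
          (isProbDensity_windowDensity hl (ha.trans_le hab) hs)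
      _ ≤ holderConst l * 1 := by rwa [mul_one]
      _ ≤ holderConst l * ((b - a) / s) ^ θ := by
        gcongr
        exact Real.one_le_rpow h1 hθ0

theorem integral_abs_windowDensity_sub_le (hl : -1 / 2 < l) {θ : ℝ} (hθ0 : 0 ≤ θ) (hθ1 : θ ≤ 1)
    (hθl : θ ≤ 2 * l + 1) (ha : 0 < a) (hb : 0 < b) (hs : 0 < s) :
    ∫ u, |windowDensity l a s u - windowDensity l b s u| ≤
      holderConst l * (|a - b| / s) ^ θ := by
  rcases le_total a b with hab | hba
  · rw [abs_sub_comm a b, abs_of_nonneg (sub_nonneg.2 hab)]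
    exact integral_abs_windowDensity_sub_le_of_le hl hθ0 hθ1 hθl ha hab hs
  · simp only [abs_sub_comm (windowDensity l a s _)]
    rw [abs_of_nonneg (sub_nonneg.2 hba)]
    exact integral_abs_windowDensity_sub_le_of_le hl hθ0 hθ1 hθl hb hba hs

end Window

section Xi

variable {n : ℕ} {l : Fin n → ℝ} {x x' z : EuclideanSpace ℝ (Fin n)} {t : ℝ}

theorem Xi_eq_prod_windowDensity (hz : ‖z‖ < √t) (hxz : ∀ j, 0 < x j + z j) :
    Xi l x z t = ∏ j, windowDensity (l j) (x j) √t (z j) := by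
  refine Finset.prod_congr rfl fun j _ => ?_
  have hzj : |z j| < √t := (PiLp.norm_apply_le z j).trans_lt hz
  rw [windowDensity, windowWeight, indicator_of_mem (mem_Ioo_neg_min_iff.2 ⟨hzj, hxz j⟩)]

theorem abs_sqrt_Xi_sub_sq_le (hl : ∀ j, -1 / 2 < l j) (hx : ∀ j, 0 < x j) (hx' : ∀ j, 0 < x' j)
    (ht : 0 < t) (hz : ‖z‖ < √t) (hxz : ∀ j, 0 < x j + z j) (hxz' : ∀ j, 0 < x' j + z j) :
    |√(Xi l x z t) - √(Xi l x' z t)| ^ 2 ≤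
      |∏ j, windowDensity (l j) (x j) √t (z j) - ∏ j, windowDensity (l j) (x' j) √t (z j)| := by
  have hs : 0 < √t := Real.sqrt_pos.2 ht
  rw [Xi_eq_prod_windowDensity hz hxz, Xi_eq_prod_windowDensity hz hxz']
  exact abs_sqrt_sub_sqrt_sq_le
    (Finset.prod_nonneg fun j _ => (isProbDensity_windowDensity (hl j) (hx j) hs).nonneg _)
    (Finset.prod_nonneg fun j _ => (isProbDensity_windowDensity (hl j) (hx' j) hs).nonneg _)

theorem setIntegral_abs_sqrt_Xi_sub_sq_le (hl : ∀ j, -1 / 2 < l j) (hx : ∀ j, 0 < x j)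
    (hx' : ∀ j, 0 < x' j) (ht : 0 < t) :
    ∫ z in Metric.ball (0 : EuclideanSpace ℝ (Fin n)) √t,
        {z : EuclideanSpace ℝ (Fin n) |
          (∀ j, 0 < x j + z j) ∧ ∀ j, 0 < x' j + z j}.indicator
        (fun z => |√(Xi l x z t) - √(Xi l x' z t)| ^ 2) z ≤
      ∑ j, ∫ u, |windowDensity (l j) (x j) √t u - windowDensity (l j) (x' j) √t u| := by
  have hs : 0 < √t := Real.sqrt_pos.2 ht
  have hf := fun j => isProbDensity_windowDensity (hl j) (hx j) hs
  have hg := fun j => isProbDensity_windowDensity (hl j) (hx' j) hs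
  set G : (Fin n → ℝ) → ℝ := fun z =>
    |∏ j, windowDensity (l j) (x j) √t (z j) - ∏ j, windowDensity (l j) (x' j) √t (z j)|
  have hG : Integrable G :=
    ((Integrable.fintype_prod fun j => (hf j).integrable).sub
      (.fintype_prod fun j => (hg j).integrable)).abs
  have hvol := PiLp.volume_preserving_ofLp (Fin n)
  rw [← integral_indicator measurableSet_ball]
  calc _ ≤ ∫ z : EuclideanSpace ℝ (Fin n), G z := by
        refine integral_mono_of_nonneg (ae_of_all _ fun z => ?_)
          (hvol.integrable_comp_of_integrable hG) (ae_of_all _ fun z => ?_)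
        · exact indicator_nonneg
            (fun z _ => indicator_nonneg (fun _ _ => by positivity) z) z
        · refine indicator_apply_le' (fun hz => ?_) fun _ => abs_nonneg _
          refine indicator_apply_le' (fun hpos => ?_) fun _ => abs_nonneg _
          exact abs_sqrt_Xi_sub_sq_le hl hx hx' ht (mem_ball_zero_iff.1 hz) hpos.1 hpos.2
    _ = ∫ z, G z :=
        hvol.integral_comp (MeasurableEquiv.toLp 2 (Fin n → ℝ)).symm.measurableEmbedding G
    _ ≤ ∑ j, ∫ u, |windowDensity (l j) (x j) √t u - windowDensity (l j) (x' j) √t u| :=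
        integral_abs_prod_sub_prod_le hf hg

end Xi

theorem exists_pos_le_half_forall_lt_add_half {ι : Type*} [Finite ι] {l : ι → ℝ}
    (hl : ∀ j, -1 / 2 < l j) : ∃ γ : ℝ, 0 < γ ∧ γ ≤ 1 / 2 ∧ ∀ k, γ < l k + 1 / 2 := by
  have hev : ∀ᶠ γ : ℝ in nhdsWithin 0 (Ioi 0), 0 < γ ∧ γ ≤ 1 / 2 ∧ ∀ k, γ < l k + 1 / 2 := by
    refine eventually_mem_nhdsWithin.and (nhdsWithin_le_nhds
      (Filter.Eventually.and ?_ (Filter.eventually_all.2 ?_)))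
    · exact eventually_le_nhds (by norm_num)
    · exact fun k => eventually_lt_nhds (by linarith [hl k])
  exact hev.exists

theorem stmt18_general {n : ℕ} (l : Fin n → ℝ) {γ : ℝ} (hγ0 : 0 < γ) (hγ : γ ≤ 1 / 2)
    (hγl : ∀ k, γ ≤ l k + 1 / 2) :
    ∃ C : ℝ, 0 < C ∧
      ∀ (x x' : EuclideanSpace ℝ (Fin n)) (t : ℝ),
        (∀ j, 0 < x j) → (∀ j, 0 < x' j) → 0 < t →
        (∫ z in Metric.ball (0 : EuclideanSpace ℝ (Fin n)) (Real.sqrt t),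
            Set.indicator {z : EuclideanSpace ℝ (Fin n) |
                (∀ j, 0 < x j + z j) ∧ (∀ j, 0 < x' j + z j)}
              (fun z => |Real.sqrt (Xi l x z t) - Real.sqrt (Xi l x' z t)| ^ 2) z) ≤
          C * (‖x - x'‖ ^ 2 / t) ^ γ := by
  have hl (j : Fin n) : -1 / 2 < l j := by linarith [hγl j]
  have hC (j : Fin n) : 0 ≤ holderConst (l j) := zero_le_two.trans (two_le_holderConst (l j))
  have hCsum : 0 ≤ ∑ j, holderConst (l j) := Finset.sum_nonneg fun j _ => hC j
  refine ⟨1 + ∑ j, holderConst (l j), by positivity, fun x x' t hx hx' ht => ?_⟩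
  have hs : 0 < √t := Real.sqrt_pos.2 ht
  have hpow : (‖x - x'‖ / √t) ^ (2 * γ) = (‖x - x'‖ ^ 2 / t) ^ γ := by
    rw [Real.rpow_mul (by positivity), Real.rpow_two, div_pow, Real.sq_sqrt ht.le]
  have hcoord (j : Fin n) : |x j - x' j| ≤ ‖x - x'‖ := PiLp.norm_apply_le (x - x') j
  calc _ ≤ _ := setIntegral_abs_sqrt_Xi_sub_sq_le hl hx hx' ht
    _ ≤ ∑ j, holderConst (l j) * (|x j - x' j| / √t) ^ (2 * γ) :=
      Finset.sum_le_sum fun j _ => integral_abs_windowDensity_sub_le (hl j) (by linarith)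
        (by linarith) (by linarith [hγl j]) (hx j) (hx' j) hs
    _ ≤ ∑ j, holderConst (l j) * (‖x - x'‖ / √t) ^ (2 * γ) := by
      gcongr with j
      exacts [hC j, hcoord j]
    _ = (∑ j, holderConst (l j)) * (‖x - x'‖ ^ 2 / t) ^ γ := by rw [← Finset.sum_mul, hpow]
    _ ≤ (1 + ∑ j, holderConst (l j)) * (‖x - x'‖ ^ 2 / t) ^ γ := by
      gcongr
      linarith

theorem stmt18 {n : ℕ} (l : Fin n → ℝ) (hl : ∀ j, -1/2 < l j) :
    ∃ γ : ℝ, 0 < γ ∧ γ ≤ 1/2 ∧ (∀ k, γ < l k + 1/2) ∧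
      ∃ C : ℝ, 0 < C ∧
        ∀ (x x' : EuclideanSpace ℝ (Fin n)) (t : ℝ),
          (∀ j, 0 < x j) → (∀ j, 0 < x' j) → 0 < t →
          (∫ z in Metric.ball (0 : EuclideanSpace ℝ (Fin n)) (Real.sqrt t),
              Set.indicator {z : EuclideanSpace ℝ (Fin n) |
                  (∀ j, 0 < x j + z j) ∧ (∀ j, 0 < x' j + z j)}
                (fun z => |Real.sqrt (Xi l x z t) - Real.sqrt (Xi l x' z t)| ^ 2) z) ≤
            C * (‖x - x'‖ ^ 2 / t) ^ γ := by
  obtain ⟨γ, hγ0, hγ, hγl⟩ := exists_pos_le_half_forall_lt_add_half hl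
  exact ⟨γ, hγ0, hγ, hγl, stmt18_general l hγ0 hγ fun k => (hγl k).le⟩
end
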